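/- Multizip commutes with projections: for all multisets m : Sym X K and n : Sym Y K, PMF.map (Sym.map Prod.fst) (mzip m n) = PMF.pure m, and symmetrically PMF.map (Sym.map Prod.snd) (mzip m n) = PMF.pure n. -/

import Mathlib

universe u

/-- Accumulation: send a tuple to its multiset of values. -/
def acc {X : Type u} {K : ℕ} (v : Fin K → X) : Sym X K :=
  ⟨(List.ofFn v : List X), by simp⟩

/-- Pushforward of the uniform distribution on permutations under `σ ↦ v ∘ σ`. -/
noncomputable def perm {X : Type u} {K : ℕ} (v : Fin K → X) : PMF (Fin K → X) :=
  PMF.map (fun σ => v ∘ σ) (PMF.uniformOfFintype (Equiv.Perm (Fin K)))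

/-!
Projecting a zip of two tuples recovers one of them, and `acc` commutes with elementwise maps, so
projecting the multiset of pairs leaves the law of the multiset of one tuple. For a tuple drawn
from an arrangement of `m` that multiset is almost surely `m`, as permuting entries preserves it.
-/

universe v

section

variable {X : Type u} {Y : Type v} {K : ℕ}

theorem acc_surjective : Function.Surjective (acc : (Fin K → X) → Sym X K) := by
  rintro ⟨⟨l⟩, rfl⟩
  exact ⟨l.get, Subtype.ext (congrArg Multiset.ofList (List.ofFn_get l))⟩

theorem acc_comp_perm (v : Fin K → X) (σ : Equiv.Perm (Fin K)) : acc (v ∘ σ) = acc v :=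
  Subtype.ext (Multiset.coe_eq_coe.2 (Equiv.Perm.ofFn_comp_perm σ v))

theorem sym_map_acc (f : X → Y) (v : Fin K → X) : Sym.map f (acc v) = acc (f ∘ v) :=
  Subtype.ext (congrArg Multiset.ofList List.map_ofFn)

-- The coercion in `perm` elaborates to a monadic lift of the law of the permutation, so `perm v`
-- unfolds to two nested `PMF.map`s.
theorem perm_eq_map (v : Fin K → X) :
    perm v = (PMF.uniformOfFintype (Equiv.Perm (Fin K))).map
      fun σ : Equiv.Perm (Fin K) => v ∘ σ :=
  PMF.map_comp _ _ _

theorem map_acc_perm (v : Fin K → X) : (perm v).map acc = PMF.pure (acc v) := by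
  have acc_comp_eq_const :
      (acc ∘ fun σ : Equiv.Perm (Fin K) => v ∘ σ) = Function.const _ (acc v) :=
    funext (acc_comp_perm v)
  rw [perm_eq_map, PMF.map_comp, acc_comp_eq_const, PMF.map_const]

theorem map_acc_arr {arr : Sym X K → PMF (Fin K → X)}
    (harr : ∀ v, arr (acc v) = perm v) (m : Sym X K) : (arr m).map acc = PMF.pure m := by
  obtain ⟨v, rfl⟩ := acc_surjective m
  rw [harr, map_acc_perm]

/-- The law of the multiset of pairs obtained by zipping independent tuples with laws `p` and `q`.
The multizip of `m` and `n` is the case where `p` and `q` are their arrangements. -/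
noncomputable def accZip (p : PMF (Fin K → X)) (q : PMF (Fin K → Y)) :
    PMF (Sym (X × Y) K) :=
  p.bind fun a => q.map fun b => acc fun i => (a i, b i)

theorem map_fst_accZip (p : PMF (Fin K → X)) (q : PMF (Fin K → Y)) :
    (accZip p q).map (Sym.map Prod.fst) = p.map acc := by
  have fst_zip (a : Fin K → X) :
      (Sym.map Prod.fst ∘ fun b : Fin K → Y => acc fun i => (a i, b i)) =
        Function.const _ (acc a) :=
    funext fun _ => sym_map_acc _ _
  simp only [accZip, PMF.map_bind, PMF.map_comp, fst_zip, PMF.map_const]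
  exact PMF.bind_pure_comp acc p

theorem map_snd_accZip (p : PMF (Fin K → X)) (q : PMF (Fin K → Y)) :
    (accZip p q).map (Sym.map Prod.snd) = q.map acc := by
  have snd_zip (a : Fin K → X) :
      (Sym.map Prod.snd ∘ fun b : Fin K → Y => acc fun i => (a i, b i)) = acc :=
    funext fun _ => sym_map_acc _ _
  simp only [accZip, PMF.map_bind, PMF.map_comp, snd_zip, PMF.bind_const]

theorem mzip_proj_general {p : PMF (Fin K → X)} {q : PMF (Fin K → Y)}
    {m : Sym X K} {n : Sym Y K} (hp : p.map acc = PMF.pure m)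
    (hq : q.map acc = PMF.pure n) :
    (accZip p q).map (Sym.map Prod.fst) = PMF.pure m ∧
      (accZip p q).map (Sym.map Prod.snd) = PMF.pure n :=
  ⟨(map_fst_accZip p q).trans hp, (map_snd_accZip p q).trans hq⟩

end

/-- Multizip commutes with projections: mapping the first (resp. second)
projection elementwise over
`mzip m n = (arr m).bind (fun a => PMF.map (fun b => acc (fun i => (a i, b i))) (arr n))`
gives the Dirac distribution at `m` (resp. `n`). -/
theorem mzip_proj {X Y : Type u} {K : ℕ}
    (arr : {Z : Type u} → {n : ℕ} → Sym Z n → PMF (Fin n → Z))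
    (harr : ∀ {Z : Type u} {n : ℕ} (v : Fin n → Z), arr (acc v) = perm v)
    (m : Sym X K) (n : Sym Y K) :
    PMF.map (Sym.map Prod.fst)
        ((arr m).bind (fun a => PMF.map (fun b => acc (fun i => (a i, b i))) (arr n))) =
      PMF.pure m ∧
    PMF.map (Sym.map Prod.snd)
        ((arr m).bind (fun a => PMF.map (fun b => acc (fun i => (a i, b i))) (arr n))) =
      PMF.pure n :=
  mzip_proj_general (map_acc_arr harr m) (map_acc_arr harr n)
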